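/- arXiv:1501.01904 — 3 statements merged into one kernel-verified Lean document; each statement's English description precedes it below -/
import Mathlib

section
/- Let A be the incidence matrix of a connected directed graph on n nodes, fix 1 ≤ r < n, and set 𝕃_{ij} = A_iA_jᵀ. Let (y,z) : [0,∞) → ℝʳ × ℝ^{n−r} be a differentiable solution of y′ = −𝕃₁₁ y − 𝕃₁₂ z, 0 = 𝕃₂₁ y + 𝕃₂₂ z, with consistent initial value (y(0), z(0)) (i.e. 𝕃₂₁ y(0) + 𝕃₂₂ z(0) = 0). Set c = (y₁(0) + ⋯ + yᵣ(0))/r. Then (y(t), z(t)) converges exponentially to the equilibrium c·𝟙: there exist constants C ≥ 0 and λ > 0 such that ‖(y(t),z(t)) − c·𝟙‖ ≤ C e^{−λt} for all t ≥ 0, where 𝟙 ∈ ℝⁿ is the all-ones vector. -/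
open Matrix

/-- `A` is the incidence matrix of a directed graph: each column has exactly one
entry equal to `+1`, exactly one entry equal to `-1`, and all other entries `0`. -/
def IsIncidenceMatrix {V E : Type*} (A : Matrix V E ℝ) : Prop :=
  ∀ j : E, ∃ i k : V, i ≠ k ∧ A i j = 1 ∧ A k j = -1 ∧
    ∀ l : V, l ≠ i → l ≠ k → A l j = 0

/-- The underlying undirected graph (nodes `a, b` adjacent iff some column of `A`
is nonzero in both rows) is connected. -/
def IsConnectedIncidence {V E : Type*} (A : Matrix V E ℝ) : Prop :=
  ∀ i k : V, Relation.ReflTransGen (fun a b => a ≠ b ∧ ∃ j : E, A a j ≠ 0 ∧ A b j ≠ 0) i k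

/-- Submatrix of `A` formed by the first block of rows (type-1 agents). -/
def firstRows {r s m : ℕ} (A : Matrix (Fin r ⊕ Fin s) (Fin m) ℝ) : Matrix (Fin r) (Fin m) ℝ :=
  A.submatrix Sum.inl id

/-- Submatrix of `A` formed by the last block of rows (type-2 agents). -/
def lastRows {r s m : ℕ} (A : Matrix (Fin r ⊕ Fin s) (Fin m) ℝ) : Matrix (Fin s) (Fin m) ℝ :=
  A.submatrix Sum.inr id

/-!
The matrix `𝕃 = A Aᵀ` is positive semidefinite with kernel `ℝ·𝟙`. Let `e = (y, z) - c·𝟙` be the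
error and `u` its first block. Since `𝕃 e` vanishes on the second block, `∑ uᵢ` has derivative
`-𝟙 ⬝ 𝕃 e = 0`, hence stays `0`, and `u ⬝ u` has derivative `-2 (e ⬝ 𝕃 e)`. Now use twice that an
injective linear map on a finite-dimensional space is bounded below. The subspace `∑ uᵢ = 0` meets
the kernel of `𝕃` trivially, so `μ (e ⬝ e) ≤ e ⬝ 𝕃 e` there, and `u` decays like `exp (-μ t)` by
Grönwall. On the subspace where the second block of `𝕃 e` vanishes, `e ↦ u` is injective, because
`u = 0` forces `e ⬝ 𝕃 e = 0`; so `u` controls all of `e`.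
-/

open Set
open scoped MatrixOrder

section FiniteDimensional

theorem exists_norm_le_mul_norm_of_disjoint_ker {𝕜 E F : Type*} [NontriviallyNormedField 𝕜]
    [CompleteSpace 𝕜] [NormedAddCommGroup E] [NormedSpace 𝕜 E] [FiniteDimensional 𝕜 E]
    [NormedAddCommGroup F] [NormedSpace 𝕜 F] {f : E →ₗ[𝕜] F} {W : Submodule 𝕜 E}
    (h : Disjoint W f.ker) : ∃ K > 0, ∀ x ∈ W, ‖x‖ ≤ K * ‖f x‖ := by
  obtain ⟨K, hK, hanti⟩ := (f.domRestrict W).exists_antilipschitzWith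
    (LinearMap.ker_eq_bot.mpr (LinearMap.injective_domRestrict_iff.mpr h))
  exact ⟨K, hK, fun x hx ↦ by simpa using hanti.le_mul_dist ⟨x, hx⟩ 0⟩

variable {ι κ : Type*} [Fintype ι] [Fintype κ]

theorem dotProduct_self_nonneg (v : ι → ℝ) : 0 ≤ v ⬝ᵥ v :=
  dotProduct_star_self_nonneg v

theorem sq_norm_le_dotProduct_self (v : ι → ℝ) : ‖v‖ ^ 2 ≤ v ⬝ᵥ v := by
  rw [← Real.le_sqrt (norm_nonneg v) (dotProduct_self_nonneg v),
    pi_norm_le_iff_of_nonneg (Real.sqrt_nonneg _)]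
  intro i
  refine Real.abs_le_sqrt ?_
  rw [sq]
  exact Finset.single_le_sum (f := fun i ↦ v i * v i) (fun i _ ↦ mul_self_nonneg _)
    (Finset.mem_univ i)

theorem dotProduct_self_le_card_mul_sq_norm (v : ι → ℝ) :
    v ⬝ᵥ v ≤ Fintype.card ι * ‖v‖ ^ 2 := by
  have hcoord (i : ι) : v i * v i ≤ ‖v‖ ^ 2 := by
    rw [← sq, sq_le_sq, abs_norm]
    exact norm_le_pi_norm v i
  simpa [dotProduct] using Finset.sum_le_sum fun i (_ : i ∈ Finset.univ) ↦ hcoord i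

theorem norm_prodMk_le_norm_sumElim {E : Type*} [SeminormedAddCommGroup E] (y : ι → E)
    (z : κ → E) : ‖(y, z)‖ ≤ ‖Sum.elim y z‖ := by
  rw [norm_prod_le_iff, pi_norm_le_iff_of_nonneg (norm_nonneg _),
    pi_norm_le_iff_of_nonneg (norm_nonneg _)]
  exact ⟨fun i ↦ norm_le_pi_norm (Sum.elim y z) (.inl i),
    fun k ↦ norm_le_pi_norm (Sum.elim y z) (.inr k)⟩

theorem dotProduct_eq_of_comp_inr_eq_zero {R : Type*} [NonUnitalNonAssocSemiring R]
    {v : ι ⊕ κ → R} (hv : v ∘ Sum.inr = 0) (x : ι ⊕ κ → R) :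
    x ⬝ᵥ v = (x ∘ Sum.inl) ⬝ᵥ (v ∘ Sum.inl) := by
  have hzero (k : κ) : v (.inr k) = 0 := congrFun hv k
  simp [dotProduct, hzero]

theorem exists_mul_dotProduct_self_le_of_disjoint_ker {L : Matrix ι ι ℝ} (hL : L.PosSemidef)
    {W : Submodule ℝ (ι → ℝ)} (hW : Disjoint W L.mulVecLin.ker) :
    ∃ μ > 0, ∀ x ∈ W, μ * (x ⬝ᵥ x) ≤ x ⬝ᵥ L *ᵥ x := by
  classical
  obtain ⟨M, rfl⟩ := CStarAlgebra.nonneg_iff_eq_star_mul_self.mp hL.nonneg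
  have hquad (x : ι → ℝ) : x ⬝ᵥ (star M * M) *ᵥ x = M *ᵥ x ⬝ᵥ M *ᵥ x := by
    rw [star_eq_conjTranspose, conjTranspose_eq_transpose_of_trivial, ← mulVec_mulVec,
      dotProduct_mulVec, vecMul_transpose]
  have hdisj : Disjoint W M.mulVecLin.ker := by
    rwa [star_eq_conjTranspose, ker_mulVecLin_conjTranspose_mul_self] at hW
  obtain ⟨K, hK, hbound⟩ := exists_norm_le_mul_norm_of_disjoint_ker hdisj
  refine ⟨((Fintype.card ι + 1) * K ^ 2)⁻¹, by positivity, fun x hx ↦ ?_⟩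
  rw [inv_mul_le_iff₀ (by positivity), hquad]
  calc x ⬝ᵥ x ≤ Fintype.card ι * ‖x‖ ^ 2 := dotProduct_self_le_card_mul_sq_norm x
    _ ≤ (Fintype.card ι + 1) * (K * ‖M *ᵥ x‖) ^ 2 := by
      gcongr
      · exact le_add_of_nonneg_right zero_le_one
      · exact hbound x hx
    _ = (Fintype.card ι + 1) * K ^ 2 * ‖M *ᵥ x‖ ^ 2 := by ring
    _ ≤ (Fintype.card ι + 1) * K ^ 2 * (M *ᵥ x ⬝ᵥ M *ᵥ x) := by
      gcongr
      exact sq_norm_le_dotProduct_self _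

end FiniteDimensional

section Calculus

theorem le_mul_exp_of_hasDerivWithinAt_le {f f' : ℝ → ℝ} {a t₀ : ℝ}
    (hf : ∀ t, t₀ ≤ t → HasDerivWithinAt f (f' t) (Ici t₀) t)
    (hle : ∀ t, t₀ ≤ t → f' t ≤ a * f t) {t : ℝ} (ht : t₀ ≤ t) :
    f t ≤ f t₀ * Real.exp (a * (t - t₀)) := by
  have hcont : ContinuousOn f (Icc t₀ t) := fun τ hτ ↦
    (hf τ hτ.1).continuousWithinAt.mono Icc_subset_Ici_self
  rw [← gronwallBound_ε0]
  exact le_gronwallBound_of_liminf_deriv_right_le hcont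
    (fun τ hτ _ ↦ ((hf τ hτ.1).mono (Ici_subset_Ici.mpr hτ.1)).liminf_right_slope_le) le_rfl
    (fun τ hτ ↦ (hle τ hτ.1).trans_eq (add_zero _).symm) t (right_mem_Icc.mpr ht)

theorem hasDerivWithinAt_dotProduct_self {ι : Type*} [Fintype ι] {y : ℝ → ι → ℝ} {y' : ι → ℝ}
    {s : Set ℝ} {t : ℝ} (hy : HasDerivWithinAt y y' s t) :
    HasDerivWithinAt (fun τ ↦ y τ ⬝ᵥ y τ) (2 * (y t ⬝ᵥ y')) s t := by
  have hcoord := hasDerivWithinAt_pi.mp hy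
  refine (HasDerivWithinAt.fun_sum fun i (_ : i ∈ Finset.univ) ↦
    (hcoord i).mul (hcoord i)).congr_deriv ?_
  rw [dotProduct, Finset.mul_sum]
  exact Finset.sum_congr rfl fun i _ ↦ by ring

end Calculus

section Incidence

variable {V E : Type*} [Fintype V] {A : Matrix V E ℝ}

theorem IsIncidenceMatrix.exists_vecMul_apply_eq_sub (hA : IsIncidenceMatrix A) (j : E) :
    ∃ i k : V, (∀ l, A l j ≠ 0 → l = i ∨ l = k) ∧ ∀ x : V → ℝ, (x ᵥ* A) j = x i - x k := by
  classical
  obtain ⟨i, k, hik, hi, hk, hzero⟩ := hA j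
  refine ⟨i, k, fun l hl ↦ ?_, fun x ↦ ?_⟩
  · by_contra! hne
    exact hl (hzero l hne.1 hne.2)
  · rw [vecMul, dotProduct, Fintype.sum_eq_add i k hik fun l hl ↦ by
      rw [hzero l hl.1 hl.2, mul_zero], hi, hk]
    ring

theorem IsIncidenceMatrix.vecMul_eq_zero_iff (hA : IsIncidenceMatrix A)
    (hconn : IsConnectedIncidence A) (x : V → ℝ) : x ᵥ* A = 0 ↔ ∀ a b, x a = x b := by
  refine ⟨fun hx a b ↦ ?_, fun hx ↦ funext fun j ↦ ?_⟩
  · induction hconn a b with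
    | refl => rfl
    | @tail b₁ b₂ _ hadj ih =>
      obtain ⟨-, j, hb₁, hb₂⟩ := hadj
      obtain ⟨i, k, hsupp, hdiff⟩ := hA.exists_vecMul_apply_eq_sub j
      have hik : x i = x k := sub_eq_zero.mp (by rw [← hdiff, hx, Pi.zero_apply])
      rcases hsupp b₁ hb₁ with rfl | rfl <;> rcases hsupp b₂ hb₂ with rfl | rfl <;> simp [ih, hik]
  · obtain ⟨i, k, -, hdiff⟩ := hA.exists_vecMul_apply_eq_sub j
    rw [hdiff, hx i k, sub_self, Pi.zero_apply]

theorem IsIncidenceMatrix.laplacian_mulVec_eq_zero_iff [Nonempty V] [Fintype E]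
    (hA : IsIncidenceMatrix A) (hconn : IsConnectedIncidence A) (x : V → ℝ) :
    (A * Aᵀ) *ᵥ x = 0 ↔ ∃ c : ℝ, x = fun _ ↦ c := by
  rw [← conjTranspose_eq_transpose_of_trivial, self_mul_conjTranspose_mulVec_eq_zero,
    conjTranspose_eq_transpose_of_trivial, mulVec_transpose, hA.vecMul_eq_zero_iff hconn]
  constructor
  · intro hx
    exact ⟨x (Classical.arbitrary V), funext fun a ↦ hx a _⟩
  · rintro ⟨c, rfl⟩ _ _
    rfl

end Incidence

section DAE

variable {ι κ : Type*} [Fintype ι] [Fintype κ]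

/-- `x` solves on `[0, ∞)` the semi-explicit differential-algebraic equation driven by `L`: the
coordinates in `ι` follow `x' = -L x`, while those in `κ` are constrained by `L x = 0`.
The derivative at `0` is one-sided. -/
structure IsDAESolution (L : Matrix (ι ⊕ κ) (ι ⊕ κ) ℝ) (x : ℝ → ι ⊕ κ → ℝ) : Prop where
  hasDerivWithinAt : ∀ t, 0 ≤ t →
    HasDerivWithinAt (fun τ ↦ x τ ∘ Sum.inl) (-((L *ᵥ x t) ∘ Sum.inl)) (Ici 0) t
  constraint : ∀ t, 0 ≤ t → (L *ᵥ x t) ∘ Sum.inr = 0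

variable {L : Matrix (ι ⊕ κ) (ι ⊕ κ) ℝ} {x : ℝ → ι ⊕ κ → ℝ}

namespace IsDAESolution

theorem of_toBlocks {y : ℝ → ι → ℝ} {z : ℝ → κ → ℝ}
    (hy : ∀ t, 0 ≤ t →
      HasDerivWithinAt y (-(L.toBlocks₁₁ *ᵥ y t) - L.toBlocks₁₂ *ᵥ z t) (Ici 0) t)
    (hz : ∀ t, 0 ≤ t → L.toBlocks₂₁ *ᵥ y t + L.toBlocks₂₂ *ᵥ z t = 0) :
    IsDAESolution L fun t ↦ Sum.elim (y t) (z t) := by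
  have hblocks (t : ℝ) : L *ᵥ Sum.elim (y t) (z t) =
      Sum.elim (L.toBlocks₁₁ *ᵥ y t + L.toBlocks₁₂ *ᵥ z t)
        (L.toBlocks₂₁ *ᵥ y t + L.toBlocks₂₂ *ᵥ z t) := by
    conv_lhs => rw [← fromBlocks_toBlocks L, fromBlocks_mulVec]
    rfl
  refine ⟨fun t ht ↦ ?_, fun t ht ↦ ?_⟩
  · simpa only [hblocks, Sum.elim_comp_inl, neg_add'] using hy t ht
  · rw [hblocks, Sum.elim_comp_inr, hz t ht]

theorem sub_of_mulVec_eq_zero (hx : IsDAESolution L x) {a : ι ⊕ κ → ℝ} (ha : L *ᵥ a = 0) :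
    IsDAESolution L fun t ↦ x t - a := by
  have hL (t : ℝ) : L *ᵥ (x t - a) = L *ᵥ x t := by rw [mulVec_sub, ha, sub_zero]
  refine ⟨fun t ht ↦ ?_, fun t ht ↦ by rw [hL, hx.constraint t ht]⟩
  rw [hL]
  exact (hx.hasDerivWithinAt t ht).sub_const (a ∘ Sum.inl)

theorem hasDerivWithinAt_dotProduct_self_comp_inl (hx : IsDAESolution L x) {t : ℝ} (ht : 0 ≤ t) :
    HasDerivWithinAt (fun τ ↦ (x τ ∘ Sum.inl) ⬝ᵥ (x τ ∘ Sum.inl)) (-2 * (x t ⬝ᵥ L *ᵥ x t))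
      (Ici 0) t := by
  refine (hasDerivWithinAt_dotProduct_self (hx.hasDerivWithinAt t ht)).congr_deriv ?_
  rw [dotProduct_eq_of_comp_inr_eq_zero (hx.constraint t ht), dotProduct_neg]
  ring

theorem sum_inl_eq_initial (hx : IsDAESolution L x) (hsymm : L.IsSymm) (hone : L *ᵥ 1 = 0) {t : ℝ}
    (ht : 0 ≤ t) : ∑ i, x t (.inl i) = ∑ i, x 0 (.inl i) := by
  have htotal (τ : ℝ) (hτ : 0 ≤ τ) : ∑ i, (L *ᵥ x τ) (.inl i) = 0 := by
    calc ∑ i, (L *ᵥ x τ) (.inl i) = 1 ⬝ᵥ L *ᵥ x τ := by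
          rw [dotProduct_eq_of_comp_inr_eq_zero (hx.constraint τ hτ)]
          simp [dotProduct]
      _ = (L *ᵥ 1) ⬝ᵥ x τ := by rw [dotProduct_mulVec, ← mulVec_transpose, hsymm]
      _ = 0 := by rw [hone, zero_dotProduct]
  have hderiv (τ : ℝ) (hτ : 0 ≤ τ) :
      HasDerivWithinAt (fun σ ↦ ∑ i, x σ (.inl i)) 0 (Ici 0) τ := by
    refine (HasDerivWithinAt.fun_sum fun i (_ : i ∈ Finset.univ) ↦
      hasDerivWithinAt_pi.mp (hx.hasDerivWithinAt τ hτ) i).congr_deriv ?_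
    simpa using htotal τ hτ
  exact constant_of_has_deriv_right_zero
    (fun τ hτ ↦ (hderiv τ hτ.1).continuousWithinAt.mono Icc_subset_Ici_self)
    (fun τ hτ ↦ (hderiv τ hτ.1).mono (Ici_subset_Ici.mpr hτ.1)) t (right_mem_Icc.mpr ht)

theorem dotProduct_self_comp_inl_le_mul_exp (hx : IsDAESolution L x) {μ : ℝ} (hμ : 0 ≤ μ)
    (hcoercive : ∀ t, 0 ≤ t → μ * (x t ⬝ᵥ x t) ≤ x t ⬝ᵥ L *ᵥ x t) {t : ℝ} (ht : 0 ≤ t) :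
    (x t ∘ Sum.inl) ⬝ᵥ (x t ∘ Sum.inl) ≤
      (x 0 ∘ Sum.inl) ⬝ᵥ (x 0 ∘ Sum.inl) * Real.exp (-2 * μ * t) := by
  have hpart (τ : ℝ) : (x τ ∘ Sum.inl) ⬝ᵥ (x τ ∘ Sum.inl) ≤ x τ ⬝ᵥ x τ := by
    conv_rhs => rw [← Sum.elim_comp_inl_inr (x τ), sumElim_dotProduct_sumElim]
    exact le_add_of_nonneg_right (dotProduct_self_nonneg _)
  have hdissipation (τ : ℝ) (hτ : 0 ≤ τ) :
      -2 * (x τ ⬝ᵥ L *ᵥ x τ) ≤ -2 * μ * ((x τ ∘ Sum.inl) ⬝ᵥ (x τ ∘ Sum.inl)) := by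
    linarith [hcoercive τ hτ, mul_le_mul_of_nonneg_left (hpart τ) hμ]
  simpa only [sub_zero] using
    le_mul_exp_of_hasDerivWithinAt_le (fun τ ↦ hx.hasDerivWithinAt_dotProduct_self_comp_inl)
      hdissipation ht

theorem norm_comp_inl_le_mul_exp (hx : IsDAESolution L x) {μ : ℝ} (hμ : 0 ≤ μ)
    (hcoercive : ∀ t, 0 ≤ t → μ * (x t ⬝ᵥ x t) ≤ x t ⬝ᵥ L *ᵥ x t) {t : ℝ} (ht : 0 ≤ t) :
    ‖x t ∘ Sum.inl‖ ≤ √((x 0 ∘ Sum.inl) ⬝ᵥ (x 0 ∘ Sum.inl)) * Real.exp (-μ * t) := by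
  refine (sq_le_sq₀ (norm_nonneg _) (by positivity)).mp ?_
  calc ‖x t ∘ Sum.inl‖ ^ 2 ≤ (x t ∘ Sum.inl) ⬝ᵥ (x t ∘ Sum.inl) := sq_norm_le_dotProduct_self _
    _ ≤ (x 0 ∘ Sum.inl) ⬝ᵥ (x 0 ∘ Sum.inl) * Real.exp (-2 * μ * t) :=
      hx.dotProduct_self_comp_inl_le_mul_exp hμ hcoercive ht
    _ = (√((x 0 ∘ Sum.inl) ⬝ᵥ (x 0 ∘ Sum.inl)) * Real.exp (-μ * t)) ^ 2 := by
      rw [mul_pow, Real.sq_sqrt (dotProduct_self_nonneg _), ← Real.exp_nat_mul]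
      congr 2
      push_cast
      ring

end IsDAESolution

theorem exists_mul_dotProduct_self_le_of_sum_inl_eq_zero [Nonempty ι] (hL : L.PosSemidef)
    (hker : ∀ x, L *ᵥ x = 0 → ∃ c : ℝ, x = fun _ ↦ c) :
    ∃ μ > 0, ∀ x, ∑ i, x (.inl i) = 0 → μ * (x ⬝ᵥ x) ≤ x ⬝ᵥ L *ᵥ x := by
  let sumInl : (ι ⊕ κ → ℝ) →ₗ[ℝ] ℝ := ∑ i, LinearMap.proj (.inl i)
  have hsum (x : ι ⊕ κ → ℝ) : x ∈ sumInl.ker ↔ ∑ i, x (.inl i) = 0 := by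
    simp [sumInl, LinearMap.sum_apply]
  have hdisj : Disjoint sumInl.ker L.mulVecLin.ker := by
    refine Submodule.disjoint_def.mpr fun x hx hLx ↦ ?_
    obtain ⟨c, rfl⟩ := hker x hLx
    have hc : c = 0 := by simpa using (hsum _).mp hx
    rw [hc]
    rfl
  obtain ⟨μ, hμ, hcoercive⟩ := exists_mul_dotProduct_self_le_of_disjoint_ker hL hdisj
  exact ⟨μ, hμ, fun x hx ↦ hcoercive x ((hsum x).mpr hx)⟩

theorem exists_norm_le_mul_norm_comp_inl [Nonempty ι] (hL : L.PosSemidef)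
    (hker : ∀ x, L *ᵥ x = 0 → ∃ c : ℝ, x = fun _ ↦ c) :
    ∃ K > 0, ∀ x, (L *ᵥ x) ∘ Sum.inr = 0 → ‖x‖ ≤ K * ‖x ∘ Sum.inl‖ := by
  let constrained : Submodule ℝ (ι ⊕ κ → ℝ) :=
    (LinearMap.funLeft ℝ ℝ Sum.inr ∘ₗ L.mulVecLin).ker
  have hdisj : Disjoint constrained (LinearMap.funLeft ℝ ℝ Sum.inl).ker := by
    refine Submodule.disjoint_def.mpr fun x (hx : (L *ᵥ x) ∘ Sum.inr = 0)
      (hinl : x ∘ Sum.inl = 0) ↦ ?_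
    have hquad : star x ⬝ᵥ L *ᵥ x = 0 := by
      rw [star_trivial, dotProduct_eq_of_comp_inr_eq_zero hx, hinl, zero_dotProduct]
    obtain ⟨c, rfl⟩ := hker x ((hL.dotProduct_mulVec_zero_iff x).mp hquad)
    have hc : c = 0 := congrFun hinl (Classical.arbitrary ι)
    rw [hc]
    rfl
  exact exists_norm_le_mul_norm_of_disjoint_ker hdisj

theorem IsDAESolution.exists_norm_sub_average_le_mul_exp [Nonempty ι]
    (hx : IsDAESolution L x) (hL : L.PosSemidef)
    (hker : ∀ x, L *ᵥ x = 0 ↔ ∃ c : ℝ, x = fun _ ↦ c) :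
    ∃ C : ℝ, 0 ≤ C ∧ ∃ lam : ℝ, 0 < lam ∧ ∀ t : ℝ, 0 ≤ t →
      ‖x t - fun _ ↦ (∑ i, x 0 (.inl i)) / Fintype.card ι‖ ≤ C * Real.exp (-lam * t) := by
  set c : ℝ := (∑ i, x 0 (.inl i)) / Fintype.card ι with hc
  set e : ℝ → ι ⊕ κ → ℝ := fun t ↦ x t - fun _ ↦ c with he_def
  have he : IsDAESolution L e := hx.sub_of_mulVec_eq_zero ((hker _).mpr ⟨c, rfl⟩)
  have hsum (t : ℝ) (ht : 0 ≤ t) : ∑ i, e t (.inl i) = 0 := by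
    rw [he.sum_inl_eq_initial (isHermitian_iff_isSymm.mp hL.isHermitian) ((hker 1).mpr ⟨1, rfl⟩) ht]
    simp [he_def, hc, mul_div_cancel₀]
  obtain ⟨μ, hμ, hcoercive⟩ := exists_mul_dotProduct_self_le_of_sum_inl_eq_zero hL
    fun x ↦ (hker x).mp
  obtain ⟨K, hK, hrecover⟩ := exists_norm_le_mul_norm_comp_inl hL fun x ↦ (hker x).mp
  refine ⟨K * √((e 0 ∘ Sum.inl) ⬝ᵥ (e 0 ∘ Sum.inl)), by positivity, μ, hμ, fun t ht ↦ ?_⟩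
  calc ‖e t‖ ≤ K * ‖e t ∘ Sum.inl‖ := hrecover _ (he.constraint t ht)
    _ ≤ K * (√((e 0 ∘ Sum.inl) ⬝ᵥ (e 0 ∘ Sum.inl)) * Real.exp (-μ * t)) := by
      gcongr
      exact he.norm_comp_inl_le_mul_exp hμ.le (fun τ hτ ↦ hcoercive _ (hsum τ hτ)) ht
    _ = _ := (mul_assoc _ _ _).symm

theorem stmt7_general [Nonempty ι] (hL : L.PosSemidef)
    (hker : ∀ x, L *ᵥ x = 0 ↔ ∃ c : ℝ, x = fun _ ↦ c)
    (y : ℝ → ι → ℝ) (z : ℝ → κ → ℝ)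
    (hy : ∀ t, 0 ≤ t →
      HasDerivWithinAt y (-(L.toBlocks₁₁ *ᵥ y t) - L.toBlocks₁₂ *ᵥ z t) (Ici 0) t)
    (hz : ∀ t, 0 ≤ t → L.toBlocks₂₁ *ᵥ y t + L.toBlocks₂₂ *ᵥ z t = 0) :
    let c : ℝ := (∑ i, y 0 i) / Fintype.card ι
    ∃ C : ℝ, 0 ≤ C ∧ ∃ lam : ℝ, 0 < lam ∧ ∀ t : ℝ, 0 ≤ t →
      ‖((y t - fun _ ↦ c, z t - fun _ ↦ c) : (ι → ℝ) × (κ → ℝ))‖ ≤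
        C * Real.exp (-lam * t) := by
  intro c
  obtain ⟨C, hC, lam, hlam, hdecay⟩ :=
    (IsDAESolution.of_toBlocks hy hz).exists_norm_sub_average_le_mul_exp hL hker
  refine ⟨C, hC, lam, hlam, fun t ht ↦ (norm_prodMk_le_norm_sumElim _ _).trans ?_⟩
  have hsub : Sum.elim (y t - fun _ ↦ c) (z t - fun _ ↦ c) =
      Sum.elim (y t) (z t) - fun _ ↦ c := by
    ext (i | k) <;> rfl
  exact hsub ▸ hdecay t ht

end DAE

/-- Any solution of the DAE `y' = -𝕃₁₁ y - 𝕃₁₂ z`, `0 = 𝕃₂₁ y + 𝕃₂₂ z` on `[0,∞)`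
with consistent initial value converges exponentially to the equilibrium `c·𝟙`,
where `c = (y₁(0) + ⋯ + yᵣ(0))/r`. -/
theorem stmt7 {r s m : ℕ} (hr : 1 ≤ r) (hs : 1 ≤ s)
    (A : Matrix (Fin r ⊕ Fin s) (Fin m) ℝ)
    (hA : IsIncidenceMatrix A) (hconn : IsConnectedIncidence A)
    (y : ℝ → Fin r → ℝ) (z : ℝ → Fin s → ℝ)
    (hy : ∀ t : ℝ, 0 ≤ t → HasDerivAt y
      (-((firstRows A * (firstRows A)ᵀ) *ᵥ y t) - (firstRows A * (lastRows A)ᵀ) *ᵥ z t) t)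
    (hz : ∀ t : ℝ, 0 ≤ t →
      (lastRows A * (firstRows A)ᵀ) *ᵥ y t + (lastRows A * (lastRows A)ᵀ) *ᵥ z t = 0) :
    let c : ℝ := (∑ i, y 0 i) / r
    ∃ C : ℝ, 0 ≤ C ∧ ∃ lam : ℝ, 0 < lam ∧ ∀ t : ℝ, 0 ≤ t →
      ‖((y t - fun _ => c, z t - fun _ => c) : (Fin r → ℝ) × (Fin s → ℝ))‖ ≤
        C * Real.exp (-lam * t) := by
  have : Nonempty (Fin r) := Fin.pos_iff_nonempty.mp hr
  -- The four blocks of `A * Aᵀ` unfold definitionally to the products in `hy` and `hz`.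
  simpa only [Fintype.card_fin] using stmt7_general (posSemidef_self_mul_conjTranspose A)
    (hA.laplacian_mulVec_eq_zero_iff hconn) y z (fun t ht ↦ (hy t ht).hasDerivWithinAt) hz
end

section
/- Consider n agents partitioned into p nonempty groups, with membership matrix A_H and group Laplacian 𝔾 = A_G A_Gᵀ for a connected group graph. Let (x,y) : [0,∞) → ℝⁿ × ℝᵖ be a differentiable solution of x′ = −x + A_H(A_HᵀA_H)⁻¹ y, y′ = A_Hᵀ x − (I_p + 𝔾) y. Set s = (x₁(0) + ⋯ + xₙ(0) + y₁(0) + ⋯ + y_p(0))/(2p). Then (x(t), y(t)) converges exponentially, as t → ∞, to the equilibrium (x*, y*) given by y*_j = s for j = 1,…,p and x*_i = s/n_{χ(i)} for i = 1,…,n: there exist C ≥ 0 and λ > 0 with ‖(x(t),y(t)) − (x*,y*)‖ ≤ C e^{−λt} for all t ≥ 0. -/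
open Matrix

/-- The 0/1 membership matrix of the partition of the `n` agents into `p` groups
determined by `χ`. -/
def membershipMatrix {n p : ℕ} (χ : Fin n → Fin p) : Matrix (Fin n) (Fin p) ℝ :=
  Matrix.of fun i j => if χ i = j then 1 else 0

/-!
Rescaling the agent variables to `u_i = √n_{χ(i)} x_i` makes the system symmetric: with `B` the
membership matrix with normalized columns, so that `Bᵀ B = 1`, it reads `z' = -Nᵀ N z` for
`z = (u, y)` and `N (u, y) = (u - B y, A_Gᵀ y)`. Along such a flow the component of `z` in `ker N`
is conserved, while on `(ker N)ᗮ` the map `N` is bounded below, so that Grönwall's inequality for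
`‖z - w‖²` gives exponential convergence to the orthogonal projection `w` of `z(0)` on `ker N`. As
the group graph is connected, `ker N` is the line spanned by `(B 1, 1)`. Since the inner product of
`(B 1, 1)` with `z` is `∑ x_i + ∑ y_j` and its squared length is `2 p`, the projection is the
claimed equilibrium.
-/

section GradientFlow

open LinearMap

theorem le_mul_exp_of_hasDerivAt_le {f f' : ℝ → ℝ} {K : ℝ}
    (hf : ∀ t, 0 ≤ t → HasDerivAt f (f' t) t) (hf' : ∀ t, 0 ≤ t → f' t ≤ K * f t)
    {t : ℝ} (ht : 0 ≤ t) : f t ≤ f 0 * Real.exp (K * t) := by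
  have h := le_gronwallBound_of_liminf_deriv_right_le (δ := f 0) (K := K) (ε := 0) (b := t)
    (fun u hu ↦ (hf u hu.1).continuousAt.continuousWithinAt)
    (fun u hu _ hr ↦ (hf u hu.1).hasDerivWithinAt.liminf_right_slope_le hr) le_rfl
    (fun u hu ↦ by simpa using hf' u hu.1) t ⟨ht, le_rfl⟩
  rwa [gronwallBound_ε0, sub_zero] at h

variable {E F : Type*} [NormedAddCommGroup E] [InnerProductSpace ℝ E] [FiniteDimensional ℝ E]
  [NormedAddCommGroup F] [InnerProductSpace ℝ F]

theorem exists_pos_mul_norm_le_norm_map_of_mem_ker_orthogonal (T : E →ₗ[ℝ] F) :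
    ∃ μ : ℝ, 0 < μ ∧ ∀ w ∈ (ker T)ᗮ, μ * ‖w‖ ≤ ‖T w‖ := by
  have hker : ker (T.domRestrict (ker T)ᗮ) = ⊥ :=
    ker_eq_bot.2 <| injective_domRestrict_iff.2 (ker T).orthogonal_disjoint.symm
  obtain ⟨K, hK, hT⟩ := exists_antilipschitzWith _ hker
  refine ⟨(K : ℝ)⁻¹, by positivity, fun w hw ↦ ?_⟩
  rw [inv_mul_le_iff₀ (by positivity)]
  simpa using hT.le_mul_norm (map_zero _) ⟨w, hw⟩

variable [FiniteDimensional ℝ F] {T : E →ₗ[ℝ] F} {z : ℝ → E}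

theorem sub_mem_ker_orthogonal_of_hasDerivAt
    (hz : ∀ t, 0 ≤ t → HasDerivAt z (-adjoint T (T (z t))) t) {t : ℝ} (ht : 0 ≤ t) :
    z t - z 0 ∈ (ker T)ᗮ := by
  intro v hv
  have hderiv : ∀ u, 0 ≤ u → HasDerivAt (fun u ↦ inner ℝ v (z u)) 0 u := fun u hu ↦ by
    simpa [adjoint_inner_right, mem_ker.1 hv] using (hasDerivAt_const u v).inner ℝ (hz u hu)
  have hconst := constant_of_has_deriv_right_zero (a := 0) (b := t)
    (fun u hu ↦ (hderiv u hu.1).continuousAt.continuousWithinAt)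
    (fun u hu ↦ (hderiv u hu.1).hasDerivWithinAt) t ⟨ht, le_rfl⟩
  rw [inner_sub_right, hconst, sub_self]

theorem hasDerivAt_norm_sub_sq_of_mem_ker {w : E} (hw : w ∈ ker T) {t : ℝ}
    (hz : HasDerivAt z (-adjoint T (T (z t))) t) :
    HasDerivAt (fun u ↦ ‖z u - w‖ ^ 2) (-2 * ‖T (z t - w)‖ ^ 2) t := by
  refine (hz.sub_const w).norm_sq.congr_deriv ?_
  rw [inner_neg_right, adjoint_inner_right, map_sub, mem_ker.1 hw, sub_zero,
    real_inner_self_eq_norm_sq]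
  ring

theorem exists_norm_sub_starProjection_ker_le_mul_exp (T : E →ₗ[ℝ] F) :
    ∃ lam : ℝ, 0 < lam ∧ ∀ z : ℝ → E,
      (∀ t, 0 ≤ t → HasDerivAt z (-adjoint T (T (z t))) t) → ∀ t, 0 ≤ t →
        ‖z t - (ker T).starProjection (z 0)‖ ≤
          ‖z 0 - (ker T).starProjection (z 0)‖ * Real.exp (-lam * t) := by
  obtain ⟨μ, hμ, hT⟩ := exists_pos_mul_norm_le_norm_map_of_mem_ker_orthogonal T
  refine ⟨μ ^ 2, by positivity, fun z hz t ht ↦ ?_⟩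
  set w := (ker T).starProjection (z 0)
  have hw : w ∈ ker T := Submodule.starProjection_apply_mem _ _
  have horth : ∀ u, 0 ≤ u → z u - w ∈ (ker T)ᗮ := fun u hu ↦ by
    simpa using add_mem (sub_mem_ker_orthogonal_of_hasDerivAt hz hu)
      ((ker T).sub_starProjection_mem_orthogonal (z 0))
  have hdecay : ‖z t - w‖ ^ 2 ≤ ‖z 0 - w‖ ^ 2 * Real.exp (-(2 * μ ^ 2) * t) := by
    refine le_mul_exp_of_hasDerivAt_le
      (fun u hu ↦ hasDerivAt_norm_sub_sq_of_mem_ker hw (hz u hu)) (fun u hu ↦ ?_) ht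
    have hcoercive := pow_le_pow_left₀ (by positivity) (hT _ (horth u hu)) 2
    rw [mul_pow] at hcoercive
    linarith
  refine le_of_sq_le_sq ?_ (by positivity)
  have hexp : Real.exp (-(2 * μ ^ 2) * t) = Real.exp (-μ ^ 2 * t) ^ 2 := by
    rw [← Real.exp_nat_mul]
    congr 1
    push_cast
    ring
  rwa [mul_pow, ← hexp]

theorem exists_norm_sub_le_mul_exp_of_hasDerivAt_neg_transpose_mul_self_mulVec
    {m k : Type*} [Fintype m] [Fintype k] (N : Matrix m k ℝ) {z : ℝ → k → ℝ} {w : k → ℝ}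
    (hz : ∀ t, 0 ≤ t → HasDerivAt z (-((Nᵀ * N) *ᵥ z t)) t) (hw : N *ᵥ w = 0)
    (horth : ∀ v, N *ᵥ v = 0 → v ⬝ᵥ (z 0 - w) = 0) :
    ∃ C : ℝ, 0 ≤ C ∧ ∃ lam : ℝ, 0 < lam ∧
      ∀ t, 0 ≤ t → ‖z t - w‖ ≤ C * Real.exp (-lam * t) := by
  classical
  obtain ⟨lam, hlam, hdecay⟩ := exists_norm_sub_starProjection_ker_le_mul_exp N.toEuclideanLin
  have hflow : ∀ t, 0 ≤ t → HasDerivAt (fun t ↦ WithLp.toLp 2 (z t))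
      (-adjoint N.toEuclideanLin (N.toEuclideanLin (WithLp.toLp 2 (z t)))) t := fun t ht ↦ by
    have h := (PiLp.hasFDerivAt_toLp (𝕜 := ℝ) 2 (z t)).comp_hasDerivAt t (hz t ht)
    refine h.congr_deriv ?_
    rw [← Matrix.toEuclideanLin_conjTranspose_eq_adjoint]
    simp
  have hproj : (ker N.toEuclideanLin).starProjection (WithLp.toLp 2 (z 0)) = WithLp.toLp 2 w := by
    refine Submodule.eq_starProjection_of_mem_of_inner_eq_zero (by simp [hw]) fun v hv ↦ ?_
    have hNv : N *ᵥ v.ofLp = 0 := by simpa using congrArg WithLp.ofLp (mem_ker.1 hv)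
    simpa [EuclideanSpace.inner_eq_star_dotProduct] using horth _ hNv
  refine ⟨_, norm_nonneg _, lam, hlam, fun t ht ↦ le_trans ?_ (hdecay _ hflow t ht)⟩
  rw [hproj, ← WithLp.toLp_sub]
  exact (pi_norm_le_iff_of_nonneg (norm_nonneg _)).2 (PiLp.norm_apply_le (WithLp.toLp 2 (z t - w)))

end GradientFlow

namespace IsIncidenceMatrix

variable {V E : Type*} [Fintype V] {A : Matrix V E ℝ}

theorem exists_transpose_mulVec_apply_eq_sub (hA : IsIncidenceMatrix A) (e : E) :
    ∃ i k : V, (∀ l, A l e ≠ 0 → l = i ∨ l = k) ∧ ∀ f : V → ℝ, (Aᵀ *ᵥ f) e = f i - f k := by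
  classical
  obtain ⟨i, k, hik, hi, hk, h0⟩ := hA e
  refine ⟨i, k, fun l hl ↦ ?_, fun f ↦ ?_⟩
  · by_contra! hne
    exact hl (h0 l hne.1 hne.2)
  · have hsupp : ∀ l ∉ ({i, k} : Finset V), A l e * f l = 0 := fun l hl ↦ by
      simp only [Finset.mem_insert, Finset.mem_singleton, not_or] at hl
      rw [h0 l hl.1 hl.2, zero_mul]
    calc (Aᵀ *ᵥ f) e = ∑ l, A l e * f l := rfl
      _ = ∑ l ∈ {i, k}, A l e * f l :=
        (Finset.sum_subset (Finset.subset_univ _) fun l _ ↦ hsupp l).symm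
      _ = f i - f k := by rw [Finset.sum_pair hik, hi, hk]; ring

theorem transpose_mulVec_eq_zero_iff (hA : IsIncidenceMatrix A)
    (hconn : IsConnectedIncidence A) {f : V → ℝ} :
    Aᵀ *ᵥ f = 0 ↔ ∃ a, f = Function.const V a := by
  constructor
  · intro hf
    have hadj : ∀ a b, (a ≠ b ∧ ∃ e, A a e ≠ 0 ∧ A b e ≠ 0) → f a = f b := by
      rintro a b ⟨-, e, ha, hb⟩
      obtain ⟨i, k, hsupp, hsub⟩ := hA.exists_transpose_mulVec_apply_eq_sub e
      have hik : f i = f k := by simpa [hf, eq_comm, sub_eq_zero] using hsub f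
      rcases hsupp a ha with rfl | rfl <;> rcases hsupp b hb with rfl | rfl <;> simp [hik]
    have hconst : ∀ a b, f a = f b := fun a b ↦ by
      induction hconn a b with
      | refl => rfl
      | tail _ hbc hab => exact hab.trans (hadj _ _ hbc)
    rcases isEmpty_or_nonempty V with hV | ⟨⟨v⟩⟩
    · exact ⟨0, Subsingleton.elim _ _⟩
    · exact ⟨f v, funext fun a ↦ hconst a v⟩
  · rintro ⟨a, rfl⟩
    ext e
    obtain ⟨i, k, -, hsub⟩ := hA.exists_transpose_mulVec_apply_eq_sub e
    simp [hsub]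

end IsIncidenceMatrix

section Membership

variable {n p : ℕ} {χ : Fin n → Fin p}

/-- The number `n_j` of agents in the group `j`, as a real number. -/
def groupSize (χ : Fin n → Fin p) (j : Fin p) : ℝ :=
  (Finset.univ.filter fun i ↦ χ i = j).card

/-- The agent part `x*_i = s / n_{χ(i)}` of the equilibrium whose group part is constantly `s`. -/
noncomputable def agentEquilibrium (χ : Fin n → Fin p) (s : ℝ) : Fin n → ℝ :=
  fun i ↦ s / groupSize χ (χ i)

/-- The diagonal matrix `D` with entries `√n_{χ(i)}`. In the variables `(D x, y)` the dynamics is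
driven by a symmetric matrix. -/
noncomputable def agentScaling (χ : Fin n → Fin p) : Matrix (Fin n) (Fin n) ℝ :=
  diagonal fun i ↦ √(groupSize χ (χ i))

/-- The membership matrix `B` with its columns normalized to unit length. -/
noncomputable def normalizedMembershipMatrix (χ : Fin n → Fin p) : Matrix (Fin n) (Fin p) ℝ :=
  membershipMatrix χ * diagonal fun j ↦ (√(groupSize χ j))⁻¹

theorem one_le_groupSize (hχ : Function.Surjective χ) (j : Fin p) : 1 ≤ groupSize χ j := by
  obtain ⟨i, hi⟩ := hχ j
  exact Nat.one_le_cast.2 <| Finset.card_pos.2 ⟨i, by simp [hi]⟩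

theorem groupSize_pos (hχ : Function.Surjective χ) (j : Fin p) : 0 < groupSize χ j :=
  one_pos.trans_le (one_le_groupSize hχ j)

theorem sqrt_groupSize_ne_zero (hχ : Function.Surjective χ) (j : Fin p) : √(groupSize χ j) ≠ 0 :=
  (Real.sqrt_pos.2 (groupSize_pos hχ j)).ne'

theorem membershipMatrix_mulVec (χ : Fin n → Fin p) (y : Fin p → ℝ) :
    membershipMatrix χ *ᵥ y = y ∘ χ := by
  ext i
  simp [membershipMatrix, mulVec, dotProduct]

theorem transpose_membershipMatrix_mul_self (χ : Fin n → Fin p) :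
    (membershipMatrix χ)ᵀ * membershipMatrix χ = diagonal (groupSize χ) := by
  ext j k
  rcases eq_or_ne j k with rfl | hjk
  · simp [mul_apply, membershipMatrix, groupSize, ← ite_and]
  · simp +contextual [mul_apply, membershipMatrix, hjk, hjk.symm]

theorem inv_transpose_membershipMatrix_mul_self (hχ : Function.Surjective χ) :
    ((membershipMatrix χ)ᵀ * membershipMatrix χ)⁻¹ = diagonal fun j ↦ (groupSize χ j)⁻¹ := by
  refine inv_eq_right_inv ?_
  rw [transpose_membershipMatrix_mul_self, diagonal_mul_diagonal, ← diagonal_one]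
  exact congrArg diagonal (funext fun j ↦ mul_inv_cancel₀ (groupSize_pos hχ j).ne')

theorem agentScaling_mul_membershipMatrix (χ : Fin n → Fin p) :
    agentScaling χ * membershipMatrix χ =
      membershipMatrix χ * diagonal fun j ↦ √(groupSize χ j) := by
  ext i j
  by_cases h : χ i = j <;> simp [agentScaling, membershipMatrix, h]

theorem agentScaling_mul_membershipMatrix_mul_inv (hχ : Function.Surjective χ) :
    agentScaling χ * (membershipMatrix χ * ((membershipMatrix χ)ᵀ * membershipMatrix χ)⁻¹) =
      normalizedMembershipMatrix χ := by
  rw [inv_transpose_membershipMatrix_mul_self hχ, ← Matrix.mul_assoc,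
    agentScaling_mul_membershipMatrix, Matrix.mul_assoc, diagonal_mul_diagonal,
    normalizedMembershipMatrix]
  simp only [← div_eq_mul_inv, Real.sqrt_div_self]

theorem transpose_normalizedMembershipMatrix_mul_agentScaling (hχ : Function.Surjective χ) :
    (normalizedMembershipMatrix χ)ᵀ * agentScaling χ = (membershipMatrix χ)ᵀ := by
  have hsymm : (agentScaling χ)ᵀ = agentScaling χ := diagonal_transpose _
  rw [← transpose_inj, transpose_mul, transpose_transpose, transpose_transpose, hsymm,
    normalizedMembershipMatrix, ← Matrix.mul_assoc, agentScaling_mul_membershipMatrix,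
    Matrix.mul_assoc, diagonal_mul_diagonal]
  simp [sqrt_groupSize_ne_zero hχ]

theorem transpose_normalizedMembershipMatrix_mul_self (hχ : Function.Surjective χ) :
    (normalizedMembershipMatrix χ)ᵀ * normalizedMembershipMatrix χ = 1 := by
  nth_rewrite 2 [← agentScaling_mul_membershipMatrix_mul_inv hχ]
  rw [← Matrix.mul_assoc, transpose_normalizedMembershipMatrix_mul_agentScaling hχ,
    ← Matrix.mul_assoc, inv_transpose_membershipMatrix_mul_self hχ,
    transpose_membershipMatrix_mul_self, diagonal_mul_diagonal]
  simp [(groupSize_pos hχ _).ne']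

theorem membershipMatrix_mul_inv_mulVec_const (hχ : Function.Surjective χ) (s : ℝ) :
    (membershipMatrix χ * ((membershipMatrix χ)ᵀ * membershipMatrix χ)⁻¹) *ᵥ
      Function.const (Fin p) s = agentEquilibrium χ s := by
  rw [inv_transpose_membershipMatrix_mul_self hχ, ← mulVec_mulVec, membershipMatrix_mulVec]
  ext i
  simp [mulVec_diagonal, agentEquilibrium, div_eq_inv_mul]

theorem sum_agentEquilibrium (hχ : Function.Surjective χ) (s : ℝ) :
    ∑ i, agentEquilibrium χ s i = p * s := by
  have hgroup : ∀ j, ∑ i with χ i = j, agentEquilibrium χ s i = s := fun j ↦ by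
    have hterm : ∀ i ∈ Finset.univ.filter (χ · = j), agentEquilibrium χ s i = s / groupSize χ j :=
      fun i hi ↦ by rw [agentEquilibrium, (Finset.mem_filter.1 hi).2]
    rw [Finset.sum_congr rfl hterm, Finset.sum_const, nsmul_eq_mul]
    exact mul_div_cancel₀ s (groupSize_pos hχ j).ne'
  simp [← Finset.sum_fiberwise Finset.univ χ, hgroup]

end Membership

section GroupDynamics

variable {n p q : ℕ} {χ : Fin n → Fin p} {AG : Matrix (Fin p) (Fin q) ℝ}

/-- The state `(x, y)` with the agent part rescaled, as a single vector. -/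
noncomputable def scaledState (χ : Fin n → Fin p) (x : Fin n → ℝ) (y : Fin p → ℝ) :
    Fin n ⊕ Fin p → ℝ :=
  Sum.elim (agentScaling χ *ᵥ x) y

/-- The matrix `N` of the map `(u, y) ↦ (u - B y, A_Gᵀ y)`. The rescaled dynamics is the gradient
flow `z' = -Nᵀ N z`. -/
noncomputable def disagreementMatrix (χ : Fin n → Fin p) (AG : Matrix (Fin p) (Fin q) ℝ) :
    Matrix (Fin n ⊕ Fin q) (Fin n ⊕ Fin p) ℝ :=
  fromBlocks 1 (-normalizedMembershipMatrix χ) 0 AGᵀ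

theorem scaledState_sub (χ : Fin n → Fin p) (x x' : Fin n → ℝ) (y y' : Fin p → ℝ) :
    scaledState χ x y - scaledState χ x' y' = scaledState χ (x - x') (y - y') := by
  rw [scaledState, scaledState, scaledState, mulVec_sub, Sum.elim_sub_sub]

theorem norm_le_norm_scaledState (hχ : Function.Surjective χ) (x : Fin n → ℝ) (y : Fin p → ℝ) :
    ‖(x, y)‖ ≤ ‖scaledState χ x y‖ := by
  refine max_le ((pi_norm_le_iff_of_nonneg (norm_nonneg _)).2 fun i ↦ ?_)
    ((pi_norm_le_iff_of_nonneg (norm_nonneg _)).2 fun j ↦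
      norm_le_pi_norm (scaledState χ x y) (.inr j))
  calc ‖x i‖ ≤ √(groupSize χ (χ i)) * ‖x i‖ :=
        le_mul_of_one_le_left (norm_nonneg _) (Real.one_le_sqrt.2 (one_le_groupSize hχ _))
    _ = ‖scaledState χ x y (.inl i)‖ := by
        simp [scaledState, agentScaling, mulVec_diagonal, abs_of_nonneg]
    _ ≤ ‖scaledState χ x y‖ := norm_le_pi_norm _ _

theorem transpose_disagreementMatrix_mul_self (hχ : Function.Surjective χ)
    (AG : Matrix (Fin p) (Fin q) ℝ) :
    (disagreementMatrix χ AG)ᵀ * disagreementMatrix χ AG =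
      fromBlocks 1 (-normalizedMembershipMatrix χ) (-(normalizedMembershipMatrix χ)ᵀ)
        (1 + AG * AGᵀ) := by
  simp [disagreementMatrix, fromBlocks_transpose, fromBlocks_multiply,
    transpose_normalizedMembershipMatrix_mul_self hχ]

theorem hasDerivAt_scaledState (hχ : Function.Surjective χ)
    {x : ℝ → Fin n → ℝ} {y : ℝ → Fin p → ℝ} {t : ℝ}
    (hx : HasDerivAt x
      (-(x t) + (membershipMatrix χ * ((membershipMatrix χ)ᵀ * membershipMatrix χ)⁻¹) *ᵥ y t) t)
    (hy : HasDerivAt y ((membershipMatrix χ)ᵀ *ᵥ x t - (1 + AG * AGᵀ) *ᵥ y t) t) :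
    HasDerivAt (fun t ↦ scaledState χ (x t) (y t))
      (-(((disagreementMatrix χ AG)ᵀ * disagreementMatrix χ AG) *ᵥ
        scaledState χ (x t) (y t))) t := by
  have hDx := (agentScaling χ).mulVecLin.toContinuousLinearMap.hasFDerivAt.comp_hasDerivAt t hx
  have hz : HasDerivAt (fun t ↦ scaledState χ (x t) (y t)) (scaledState χ _ _) t :=
    hasDerivAt_pi.2 (Sum.rec (hasDerivAt_pi.1 hDx) (hasDerivAt_pi.1 hy))
  refine hz.congr_deriv ?_
  rw [transpose_disagreementMatrix_mul_self hχ, scaledState, scaledState, fromBlocks_mulVec,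
    mulVec_add, mulVec_mulVec, agentScaling_mul_membershipMatrix_mul_inv hχ,
    ← transpose_normalizedMembershipMatrix_mul_agentScaling hχ, ← Sum.elim_neg_neg]
  simp [mulVec_neg, neg_mulVec, sub_eq_add_neg, add_comm]

theorem scaledState_agentEquilibrium (hχ : Function.Surjective χ) (s : ℝ) :
    scaledState χ (agentEquilibrium χ s) (Function.const (Fin p) s) = Sum.elim
      (normalizedMembershipMatrix χ *ᵥ Function.const (Fin p) s) (Function.const (Fin p) s) := by
  rw [scaledState, ← membershipMatrix_mul_inv_mulVec_const hχ, mulVec_mulVec,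
    agentScaling_mul_membershipMatrix_mul_inv hχ]

theorem disagreementMatrix_mulVec_eq_zero_iff (hχ : Function.Surjective χ)
    (hAG : IsIncidenceMatrix AG) (hconn : IsConnectedIncidence AG) {v : Fin n ⊕ Fin p → ℝ} :
    disagreementMatrix χ AG *ᵥ v = 0 ↔
      ∃ a, v = scaledState χ (agentEquilibrium χ a) (Function.const (Fin p) a) := by
  obtain ⟨u, y, rfl⟩ : ∃ u y, v = Sum.elim u y := ⟨_, _, (Sum.elim_comp_inl_inr v).symm⟩
  have hblocks : disagreementMatrix χ AG *ᵥ Sum.elim u y = 0 ↔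
      u = normalizedMembershipMatrix χ *ᵥ y ∧ AGᵀ *ᵥ y = 0 := by
    rw [disagreementMatrix, fromBlocks_mulVec, ← Sum.elim_zero_zero, Sum.elim_eq_iff]
    simp [neg_mulVec, ← sub_eq_add_neg, sub_eq_zero]
  rw [hblocks, hAG.transpose_mulVec_eq_zero_iff hconn]
  simp only [scaledState_agentEquilibrium hχ, Sum.elim_eq_iff]
  constructor
  · rintro ⟨rfl, a, rfl⟩
    exact ⟨a, rfl, rfl⟩
  · rintro ⟨a, rfl, rfl⟩
    exact ⟨rfl, a, rfl⟩

theorem scaledState_agentEquilibrium_dotProduct (hχ : Function.Surjective χ)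
    (a : ℝ) (x : Fin n → ℝ) (y : Fin p → ℝ) :
    scaledState χ (agentEquilibrium χ a) (Function.const (Fin p) a) ⬝ᵥ scaledState χ x y =
      a * (∑ i, x i + ∑ j, y j) := by
  have hagents : normalizedMembershipMatrix χ *ᵥ Function.const (Fin p) a ⬝ᵥ
      agentScaling χ *ᵥ x = Function.const (Fin n) a ⬝ᵥ x := by
    rw [dotProduct_mulVec, ← vecMul_transpose, vecMul_vecMul,
      transpose_normalizedMembershipMatrix_mul_agentScaling hχ, vecMul_transpose,
      membershipMatrix_mulVec, Function.const_comp]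
  rw [scaledState_agentEquilibrium hχ, scaledState, sumElim_dotProduct_sumElim, hagents, mul_add,
    Finset.mul_sum, Finset.mul_sum]
  rfl

theorem sum_sub_agentEquilibrium_add_sum_sub_eq_zero (hχ : Function.Surjective χ)
    (x : Fin n → ℝ) (y : Fin p → ℝ) {s : ℝ} (hs : s = (∑ i, x i + ∑ j, y j) / (2 * p)) :
    ∑ i, (x - agentEquilibrium χ s) i + ∑ j, (y - Function.const (Fin p) s) j = 0 := by
  rcases eq_or_ne p 0 with rfl | hp
  · have := Function.isEmpty χ
    simp
  · have hp' : (p : ℝ) ≠ 0 := Nat.cast_ne_zero.2 hp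
    simp only [Pi.sub_apply, Finset.sum_sub_distrib, sum_agentEquilibrium hχ,
      Function.const_apply, Finset.sum_const, Finset.card_univ, Fintype.card_fin, nsmul_eq_mul]
    rw [hs]
    field_simp
    ring

end GroupDynamics

/-- Any solution on `[0,∞)` of `x' = -x + A_H (A_Hᵀ A_H)⁻¹ y`,
`y' = A_Hᵀ x - (I_p + 𝔾) y` converges exponentially to the equilibrium
`y*_j = s`, `x*_i = s / n_{χ(i)}`, where
`s = (∑ᵢ xᵢ(0) + ∑ⱼ yⱼ(0)) / (2p)`. -/
theorem stmt12 {n p q : ℕ} (χ : Fin n → Fin p) (hχ : Function.Surjective χ)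
    (AG : Matrix (Fin p) (Fin q) ℝ)
    (hAG : IsIncidenceMatrix AG) (hconn : IsConnectedIncidence AG)
    (x : ℝ → Fin n → ℝ) (y : ℝ → Fin p → ℝ)
    (hx : ∀ t : ℝ, 0 ≤ t → HasDerivAt x
      (-(x t) + (membershipMatrix χ * ((membershipMatrix χ)ᵀ * membershipMatrix χ)⁻¹) *ᵥ y t) t)
    (hy : ∀ t : ℝ, 0 ≤ t → HasDerivAt y
      ((membershipMatrix χ)ᵀ *ᵥ x t - (1 + AG * AGᵀ) *ᵥ y t) t) :
    let s : ℝ := ((∑ i, x 0 i) + ∑ j, y 0 j) / (2 * p)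
    let xstar : Fin n → ℝ := fun i => s / ((Finset.univ.filter fun i' => χ i' = χ i).card : ℝ)
    let ystar : Fin p → ℝ := fun _ => s
    ∃ C : ℝ, 0 ≤ C ∧ ∃ lam : ℝ, 0 < lam ∧ ∀ t : ℝ, 0 ≤ t →
      ‖((x t - xstar, y t - ystar) : (Fin n → ℝ) × (Fin p → ℝ))‖ ≤
        C * Real.exp (-lam * t) := by
  intro s xstar ystar
  have hflow := fun t ht ↦ hasDerivAt_scaledState hχ (hx t ht) (hy t ht)
  have hequilibrium : disagreementMatrix χ AG *ᵥ scaledState χ xstar ystar = 0 :=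
    (disagreementMatrix_mulVec_eq_zero_iff hχ hAG hconn).2 ⟨s, rfl⟩
  have horth : ∀ v, disagreementMatrix χ AG *ᵥ v = 0 →
      v ⬝ᵥ (scaledState χ (x 0) (y 0) - scaledState χ xstar ystar) = 0 := fun v hv ↦ by
    obtain ⟨a, rfl⟩ := (disagreementMatrix_mulVec_eq_zero_iff hχ hAG hconn).1 hv
    rw [scaledState_sub, scaledState_agentEquilibrium_dotProduct hχ]
    exact mul_eq_zero_of_right a
      (sum_sub_agentEquilibrium_add_sum_sub_eq_zero hχ (x 0) (y 0) (s := s) rfl)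
  obtain ⟨C, hC, lam, hlam, hdecay⟩ :=
    exists_norm_sub_le_mul_exp_of_hasDerivAt_neg_transpose_mul_self_mulVec _
      hflow hequilibrium horth
  refine ⟨C, hC, lam, hlam, fun t ht ↦ (norm_le_norm_scaledState hχ _ _).trans ?_⟩
  rw [← scaledState_sub]
  exact hdecay t ht
end

section
/- Let A be the incidence matrix of a connected directed graph on n nodes and m edges, let W = diag(W₁,…,W_m) be any diagonal matrix, and let A_{r1} and A_{r2} be reduced incidence matrices obtained from A by deleting one (possibly different) row each. Then det(A_{r1} W A_{r2}ᵀ) = 0 if and only if det(A_{r1} W A_{r1}ᵀ) = 0; in particular, all (n−1)-minors of A W Aᵀ vanish simultaneously. -/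
open Matrix

/-- The reduced incidence matrix obtained from `A` by deleting row `i0`. -/
def reducedIncidence {n m : ℕ} (A : Matrix (Fin (n + 1)) (Fin m) ℝ) (i0 : Fin (n + 1)) :
    Matrix (Fin n) (Fin m) ℝ :=
  A.submatrix i0.succAbove id

/-!
The all-ones vector annihilates an incidence matrix `A` from the left, hence `A W Aᵀ` from both
sides. In a square matrix with this property each row is minus the sum of the other rows, and
likewise for the columns, so all maximal proper minors agree up to sign.
-/

theorem IsIncidenceMatrix.one_vecMul_eq_zero {V E : Type*} [Fintype V] {A : Matrix V E ℝ}
    (hA : IsIncidenceMatrix A) : 1 ᵥ* A = 0 := by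
  ext j
  obtain ⟨i, k, hik, hi, hk, hzero⟩ := hA j
  calc (1 ᵥ* A) j = ∑ l, A l j := by simp only [vecMul, one_dotProduct]
    _ = A i j + A k j := Fintype.sum_eq_add i k hik fun l hl ↦ hzero l hl.1 hl.2
    _ = 0 := by rw [hi, hk, add_neg_cancel]

section Minors

variable {R : Type*} [CommRing R] {n : ℕ}

theorem det_submatrix_succAbove_succAbove_eq_negOnePow_smul
    {M : Matrix (Fin (n + 1)) (Fin (n + 1)) R} (hcol : 1 ᵥ* M = 0) (hrow : M *ᵥ 1 = 0)
    (i j i' j' : Fin (n + 1)) :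
    (M.submatrix i.succAbove j.succAbove).det =
      Int.negOnePow (i - i' + (j - j')) • (M.submatrix i'.succAbove j'.succAbove).det := by
  have hcolSum : ∑ k, M.submatrix id j.succAbove k = 0 := by
    rw [← one_vecMul]
    exact funext fun l ↦ congrFun hcol (j.succAbove l)
  have hrowSum (k : Fin n) : ∑ l, M.submatrix i'.succAbove id k l = 0 := by
    rw [← dotProduct_one]
    exact congrFun hrow (i'.succAbove k)
  calc (M.submatrix i.succAbove j.succAbove).det
      = Int.negOnePow (i - i') • (M.submatrix i'.succAbove j.succAbove).det :=
        submatrix_succAbove_det_eq_negOnePow_submatrix_succAbove_det _ hcolSum i i'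
    _ = Int.negOnePow (i - i') •
          Int.negOnePow (j - j') • (M.submatrix i'.succAbove j'.succAbove).det :=
        congrArg _ <|
          submatrix_succAbove_det_eq_negOnePow_submatrix_succAbove_det' _ hrowSum j j'
    _ = _ := by rw [smul_smul, ← Int.negOnePow_add]

theorem stmt15_general {E F : Type*} [Fintype E] [Fintype F]
    {A : Matrix (Fin (n + 1)) E R} {B : Matrix (Fin (n + 1)) F R}
    (hA : 1 ᵥ* A = 0) (hB : 1 ᵥ* B = 0) (W : Matrix E F R) (i j i' j' : Fin (n + 1)) :
    (A.submatrix i.succAbove id * W * (B.submatrix j.succAbove id)ᵀ).det = 0 ↔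
      (A.submatrix i'.succAbove id * W * (B.submatrix j'.succAbove id)ᵀ).det = 0 := by
  have hcol : 1 ᵥ* (A * W * Bᵀ) = 0 := by
    rw [← vecMul_vecMul, ← vecMul_vecMul, hA, zero_vecMul, zero_vecMul]
  have hrow : (A * W * Bᵀ) *ᵥ 1 = 0 := by
    rw [← mulVec_mulVec, mulVec_transpose, hB, mulVec_zero]
  have hminor (k l : Fin (n + 1)) :
      A.submatrix k.succAbove id * W * (B.submatrix l.succAbove id)ᵀ =
        (A * W * Bᵀ).submatrix k.succAbove l.succAbove := rfl
  rw [hminor, hminor, det_submatrix_succAbove_succAbove_eq_negOnePow_smul hcol hrow i j i' j',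
    smul_eq_zero_iff_eq]

end Minors

/-- For any diagonal weight matrix `W` and reduced incidence matrices `A_{r1}`,
`A_{r2}` (obtained by deleting one row each), `det (A_{r1} W A_{r2}ᵀ) = 0` iff
`det (A_{r1} W A_{r1}ᵀ) = 0`; in particular all `(n-1)`-minors of `A W Aᵀ` vanish
simultaneously. -/
theorem stmt15 {n m : ℕ} (A : Matrix (Fin (n + 1)) (Fin m) ℝ)
    (hA : IsIncidenceMatrix A) (hconn : IsConnectedIncidence A)
    (w : Fin m → ℝ) :
    (∀ i0 i1 : Fin (n + 1),
      (reducedIncidence A i0 * Matrix.diagonal w * (reducedIncidence A i1)ᵀ).det = 0 ↔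
      (reducedIncidence A i0 * Matrix.diagonal w * (reducedIncidence A i0)ᵀ).det = 0) ∧
    (∀ i0 i1 i0' i1' : Fin (n + 1),
      (reducedIncidence A i0 * Matrix.diagonal w * (reducedIncidence A i1)ᵀ).det = 0 ↔
      (reducedIncidence A i0' * Matrix.diagonal w * (reducedIncidence A i1')ᵀ).det = 0) :=
  have hminors := stmt15_general hA.one_vecMul_eq_zero hA.one_vecMul_eq_zero (diagonal w)
  ⟨fun i0 i1 ↦ hminors i0 i1 i0 i0, hminors⟩
end
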